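/- arXiv:2512.14378 — 2 statements merged into one kernel-verified Lean document; each statement's English description precedes it below -/
import Mathlib

section
/- Let n ≥ 12 be divisible by 4, let H be a saturated orthogonal array OA(n,n−1,2,2), let three distinct fixed columns a,b,c of H be removed, and let d be the nonnegative integer with 4d = #{rows i : a_i·b_i·c_i = +1}. Then the sum of J₃(S)² over all unordered 3-subsets S of the remaining n−4 columns equals n²(n−4)(n−8)/6 + 16d(n−4d). -/
open Finset

/-!
Adjoining the constant column turns a saturated two-level array into a Hadamard matrix, so its
columns form an orthogonal basis. Parseval's identity for the product of two distinct columns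
`x`, `y` then says that `∑ z, J₃(x, y, z)² = n²`, where triples with a repeated column contribute
`0`. For a symmetric function of three columns with such line sums, inclusion–exclusion shows that
the sum over triples avoiding a set `D` of columns plus the sum over triples inside `D` depends
only on `#D`. For `D = {a, b, c}` the second sum comes from the single value
`J₃(a, b, c) = 8d - n`.
-/

section Combinatorics

variable {κ M R : Type*} [DecidableEq κ]

theorem succ_nsmul_sum_powersetCard_succ [AddCommMonoid M] (k : ℕ) (s : Finset κ)
    (f : Finset κ → M) :
    (k + 1) • ∑ S ∈ s.powersetCard (k + 1), f S =
      ∑ x ∈ s, ∑ T ∈ (s.erase x).powersetCard k, f (insert x T) := by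
  calc (k + 1) • ∑ S ∈ s.powersetCard (k + 1), f S
      = ∑ S ∈ s.powersetCard (k + 1), ∑ _x ∈ S, f S := by
        rw [smul_sum]
        refine sum_congr rfl fun S hS ↦ ?_
        rw [sum_const, (mem_powersetCard.1 hS).2]
    _ = ∑ x ∈ s, ∑ S ∈ s.powersetCard (k + 1) with x ∈ S, f S :=
        sum_comm' fun S x ↦ by grind
    _ = ∑ x ∈ s, ∑ T ∈ (s.erase x).powersetCard k, f (insert x T) := by
        refine sum_congr rfl fun x hx ↦ ?_
        refine sum_nbij' (·.erase x) (insert x) ?_ ?_ ?_ ?_ ?_ <;> grind [insert_erase]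

theorem six_nsmul_sum_powersetCard_three [AddCommMonoid M] (s : Finset κ) (f : Finset κ → M) :
    6 • ∑ S ∈ s.powersetCard 3, f S =
      ∑ x ∈ s, ∑ y ∈ s.erase x, ∑ z ∈ (s.erase x).erase y, f {x, y, z} := by
  have pairs (x : κ) : 2 • ∑ T ∈ (s.erase x).powersetCard 2, f (insert x T) =
      ∑ y ∈ s.erase x, ∑ z ∈ (s.erase x).erase y, f {x, y, z} := by
    rw [succ_nsmul_sum_powersetCard_succ 1]
    simp only [powersetCard_one, sum_map, Function.Embedding.coeFn_mk]
  rw [show 6 = 2 * (2 + 1) from rfl, mul_smul, succ_nsmul_sum_powersetCard_succ, smul_sum]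
  exact sum_congr rfl fun x _ ↦ pairs x

theorem sum_sum_ite_eq_zero_self [CommRing R] (s : Finset κ) (c : R) :
    ∑ x ∈ s, ∑ y ∈ s, (if x = y then 0 else c) = #s * (#s - 1) * c := by
  have row (x : κ) (hx : x ∈ s) : ∑ y ∈ s, (if x = y then 0 else c) = (#s - 1) * c := by
    have h (y : κ) : (if x = y then 0 else c) = c - if x = y then c else 0 := by
      split_ifs <;> simp
    simp only [h, sum_sub_distrib, sum_const, nsmul_eq_mul, sum_ite_eq, hx, if_true]
    ring
  rw [sum_congr rfl row, sum_const, nsmul_eq_mul, mul_assoc]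

theorem sum_sum_ite_eq_zero_of_disjoint [CommRing R] {s t : Finset κ} (hst : Disjoint s t)
    (c : R) : ∑ x ∈ s, ∑ y ∈ t, (if x = y then 0 else c) = #s * #t * c := by
  have entry (x : κ) (hx : x ∈ s) (y : κ) (hy : y ∈ t) : (if x = y then 0 else c) = c :=
    if_neg (disjoint_iff_ne.1 hst x hx y hy)
  rw [sum_congr rfl fun x hx ↦ sum_congr rfl (entry x hx)]
  simp [mul_assoc]

theorem sum_triple_compl_add_sum_triple [Fintype κ] [CommRing R] {F : κ → κ → κ → R} {c : R}
    (swap_left : ∀ x y z, F x y z = F y x z) (swap_right : ∀ x y z, F x y z = F x z y)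
    (line_sum : ∀ x y, ∑ z, F x y z = if x = y then 0 else c) (D : Finset κ) :
    ∑ x ∈ Dᶜ, ∑ y ∈ Dᶜ, ∑ z ∈ Dᶜ, F x y z + ∑ x ∈ D, ∑ y ∈ D, ∑ z ∈ D, F x y z =
      (#Dᶜ * (#Dᶜ - 1) - #Dᶜ * #D + #D * (#D - 1)) * c := by
  have split (P Q : Finset κ) :
      ∑ x ∈ P, ∑ y ∈ Q, ∑ z ∈ Dᶜ, F x y z + ∑ x ∈ P, ∑ y ∈ Q, ∑ z ∈ D, F x y z =
        ∑ x ∈ P, ∑ y ∈ Q, if x = y then 0 else c := by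
    simp only [← sum_add_distrib, sum_compl_add_sum, line_sum]
  have two_outside : ∑ x ∈ Dᶜ, ∑ y ∈ Dᶜ, ∑ z ∈ D, F x y z =
      ∑ x ∈ Dᶜ, ∑ y ∈ D, ∑ z ∈ Dᶜ, F x y z := by
    refine sum_congr rfl fun x _ ↦ ?_
    rw [sum_comm]
    simp only [swap_right x]
  have one_outside : ∑ x ∈ Dᶜ, ∑ y ∈ D, ∑ z ∈ D, F x y z =
      ∑ x ∈ D, ∑ y ∈ D, ∑ z ∈ Dᶜ, F x y z := by
    rw [sum_comm]
    refine sum_congr rfl fun y _ ↦ ?_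
    rw [sum_comm]
    exact sum_congr rfl fun z _ ↦ sum_congr rfl fun x _ ↦ by rw [swap_left, swap_right]
  have outside := (split Dᶜ Dᶜ).trans (sum_sum_ite_eq_zero_self Dᶜ c)
  have mixed := (split Dᶜ D).trans (sum_sum_ite_eq_zero_of_disjoint disjoint_compl_left c)
  have inside := (split D D).trans (sum_sum_ite_eq_zero_self D c)
  linear_combination outside - mixed + inside - two_outside + one_outside

end Combinatorics

theorem sum_eq_two_mul_card_sub_card {ι : Type*} [Fintype ι] {f : ι → ℤ}
    (hf : ∀ i, f i = 1 ∨ f i = -1) :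
    ∑ i, f i = 2 * #{i | f i = 1} - Fintype.card ι := by
  have indicator (i : ι) : f i = 2 * (if f i = 1 then 1 else 0) - 1 := by
    rcases hf i with h | h <;> simp [h]
  rw [sum_congr rfl fun i _ ↦ indicator i, sum_sub_distrib, ← mul_sum, sum_boole]
  simp

theorem vecMul_dotProduct_star_vecMul_of_isHadamard {ι R : Type*} [Fintype ι] [DecidableEq ι]
    [CommSemiring R] [StarRing R] {A : Matrix ι ι R} (hA : A.IsHadamard) (v : ι → R) :
    Matrix.vecMul v A ⬝ᵥ star (Matrix.vecMul v A) = Fintype.card ι * (v ⬝ᵥ star v) := by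
  rw [Matrix.star_vecMul, ← Matrix.dotProduct_mulVec, Matrix.mulVec_mulVec, hA.mul_conjTranspose,
    Matrix.smul_mulVec, Matrix.one_mulVec, dotProduct_smul, smul_eq_mul]

section Design

variable {ι κ : Type*} [Fintype ι]

/-- The J-characteristic of the columns in `S`, of order `#S`. -/
def jChar (H : ι → κ → ℤ) (S : Finset κ) : ℤ :=
  ∑ i, ∏ j ∈ S, H i j

/-- The J-characteristic of order 3 as a function of an ordered triple. Unlike `jChar` it counts
columns with multiplicity, so that Parseval's identity can be summed over all columns. -/
def jTriple (H : ι → κ → ℤ) (x y z : κ) : ℤ :=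
  ∑ i, H i x * H i y * H i z

/-- The design with the constant column `1` adjoined at index `none`, a square matrix up to
reindexing when the design is saturated. -/
def adjoinOnes (H : ι → κ → ℤ) : Matrix ι (Option κ) ℤ :=
  Matrix.of fun i o ↦ o.elim 1 (H i)

/-- Saturated orthogonal arrays `OA(n, n-1, 2, 2)` with `n = Fintype.card ι` rows and columns
indexed by `κ`. The levels are `±1`, and strength two is expressed by balanced and pairwise
orthogonal columns. -/
structure IsSaturatedOA [Fintype κ] (H : ι → κ → ℤ) : Prop where
  card_rows : Fintype.card ι = Fintype.card κ + 1
  eq_one_or_eq_neg_one : ∀ i j, H i j = 1 ∨ H i j = -1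
  sum_eq_zero : ∀ j, ∑ i, H i j = 0
  sum_mul_eq_zero : ∀ j k, j ≠ k → ∑ i, H i j * H i k = 0

theorem jTriple_swap_left (H : ι → κ → ℤ) (x y z : κ) : jTriple H x y z = jTriple H y x z :=
  sum_congr rfl fun _ _ ↦ by ring

theorem jTriple_swap_right (H : ι → κ → ℤ) (x y z : κ) : jTriple H x y z = jTriple H x z y :=
  sum_congr rfl fun _ _ ↦ by ring

theorem jChar_insert_insert_singleton [DecidableEq κ] (H : ι → κ → ℤ) {x y z : κ} (hxy : x ≠ y)
    (hxz : x ≠ z) (hyz : y ≠ z) : jChar H {x, y, z} = jTriple H x y z :=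
  sum_congr rfl fun i _ ↦ by
    rw [prod_insert (by simp [hxy, hxz]), prod_pair hyz, mul_assoc]

namespace IsSaturatedOA

variable [Fintype κ] {H : ι → κ → ℤ}

theorem mul_self_eq_one (hH : IsSaturatedOA H) (i : ι) (j : κ) : H i j * H i j = 1 :=
  mul_self_eq_one_iff.2 (hH.eq_one_or_eq_neg_one i j)

theorem jTriple_self_left (hH : IsSaturatedOA H) (x z : κ) : jTriple H x x z = 0 := by
  simp only [jTriple, hH.mul_self_eq_one, one_mul, hH.sum_eq_zero]

theorem jTriple_self_right (hH : IsSaturatedOA H) (x y : κ) : jTriple H x y y = 0 := by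
  rw [jTriple_swap_right, jTriple_swap_left, jTriple_swap_right, hH.jTriple_self_left]

theorem jTriple_self_outer (hH : IsSaturatedOA H) (x y : κ) : jTriple H x y x = 0 := by
  rw [jTriple_swap_right, hH.jTriple_self_left]

theorem transpose_adjoinOnes_mul_adjoinOnes [DecidableEq κ] (hH : IsSaturatedOA H) :
    (adjoinOnes H).transpose * adjoinOnes H =
      (Fintype.card ι : ℤ) • (1 : Matrix (Option κ) (Option κ) ℤ) := by
  ext o p
  rcases o with _ | j <;> rcases p with _ | k
  · simp [adjoinOnes, Matrix.mul_apply]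
  · simp [adjoinOnes, Matrix.mul_apply, hH.sum_eq_zero]
  · simp [adjoinOnes, Matrix.mul_apply, hH.sum_eq_zero]
  · rcases eq_or_ne j k with rfl | hjk
    · simp [adjoinOnes, Matrix.mul_apply, hH.mul_self_eq_one]
    · simp [adjoinOnes, Matrix.mul_apply, hH.sum_mul_eq_zero j k hjk, hjk]

theorem isHadamard_adjoinOnes_submatrix [DecidableEq ι] (hH : IsSaturatedOA H)
    (e : ι ≃ Option κ) : ((adjoinOnes H).submatrix id e).IsHadamard := by
  classical
  have entries (i : ι) (o : Option κ) : adjoinOnes H i o ∈ unitary ℤ := by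
    rcases o with _ | j
    · exact one_mem _
    · exact Unitary.mem_iff_eq_one_or_eq_neg_one.2 (hH.eq_one_or_eq_neg_one i j)
  have card_ne_zero : (Fintype.card ι : ℤ) ≠ 0 := by
    rw [hH.card_rows]
    positivity
  rw [← Matrix.isHadamard_transpose_iff]
  refine .of_mul_conjTranspose (fun j i ↦ entries i (e j)) ?_ (.of_ne_zero card_ne_zero)
  rw [Matrix.conjTranspose_eq_transpose_of_trivial, Matrix.transpose_transpose,
    Matrix.transpose_submatrix, ← Matrix.submatrix_mul _ _ _ id _ Function.bijective_id,
    hH.transpose_adjoinOnes_mul_adjoinOnes]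
  simp only [Matrix.submatrix_smul, Pi.smul_apply, Matrix.submatrix_one_equiv]

theorem parseval (hH : IsSaturatedOA H) (v : ι → ℤ) :
    ∑ j, (∑ i, v i * H i j) ^ 2 + (∑ i, v i) ^ 2 = Fintype.card ι * ∑ i, v i ^ 2 := by
  classical
  have e : ι ≃ Option κ := Fintype.equivOfCardEq (by rw [hH.card_rows, Fintype.card_option])
  calc ∑ j, (∑ i, v i * H i j) ^ 2 + (∑ i, v i) ^ 2
      = ∑ o, (∑ i, v i * adjoinOnes H i o) ^ 2 := by
        simp [Fintype.sum_option, adjoinOnes, add_comm]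
    _ = ∑ k, (∑ i, v i * adjoinOnes H i (e k)) ^ 2 := (e.sum_comp _).symm
    _ = Fintype.card ι * ∑ i, v i ^ 2 := by
        simpa [dotProduct, Matrix.vecMul, sq] using
          vecMul_dotProduct_star_vecMul_of_isHadamard (hH.isHadamard_adjoinOnes_submatrix e) v

theorem sum_jTriple_sq [DecidableEq κ] (hH : IsSaturatedOA H) (x y : κ) :
    ∑ z, jTriple H x y z ^ 2 = if x = y then 0 else (Fintype.card ι : ℤ) ^ 2 := by
  split_ifs with hxy
  · subst hxy
    simp [hH.jTriple_self_left]
  · have entry_sq (i : ι) : (H i x * H i y) ^ 2 = 1 := by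
      rw [sq, mul_mul_mul_comm, hH.mul_self_eq_one, hH.mul_self_eq_one, one_mul]
    simpa [jTriple, entry_sq, hH.sum_mul_eq_zero x y hxy, ← sq] using
      hH.parseval fun i ↦ H i x * H i y

theorem six_mul_sum_jChar_sq (hH : IsSaturatedOA H) (s : Finset κ) :
    6 * ∑ S ∈ s.powersetCard 3, jChar H S ^ 2 =
      ∑ x ∈ s, ∑ y ∈ s, ∑ z ∈ s, jTriple H x y z ^ 2 := by
  classical
  calc 6 * ∑ S ∈ s.powersetCard 3, jChar H S ^ 2
      = ∑ x ∈ s, ∑ y ∈ s.erase x, ∑ z ∈ (s.erase x).erase y, jChar H {x, y, z} ^ 2 := by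
        simpa using six_nsmul_sum_powersetCard_three s fun S ↦ jChar H S ^ 2
    _ = ∑ x ∈ s, ∑ y ∈ s.erase x, ∑ z ∈ (s.erase x).erase y, jTriple H x y z ^ 2 := by
        refine sum_congr rfl fun x _ ↦ sum_congr rfl fun y hy ↦ sum_congr rfl fun z hz ↦ ?_
        rw [jChar_insert_insert_singleton] <;> grind
    _ = ∑ x ∈ s, ∑ y ∈ s, ∑ z ∈ s, jTriple H x y z ^ 2 := by
        refine sum_congr rfl fun x _ ↦ ?_
        rw [← sum_erase s (a := x) (by simp [hH.jTriple_self_left])]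
        refine sum_congr rfl fun y _ ↦ ?_
        rw [sum_erase _ (by simp [hH.jTriple_self_right]),
          sum_erase _ (by simp [hH.jTriple_self_outer])]

theorem six_mul_sum_jChar_sq_compl_add [DecidableEq κ] (hH : IsSaturatedOA H) (D : Finset κ) :
    6 * (∑ S ∈ Dᶜ.powersetCard 3, jChar H S ^ 2 + ∑ S ∈ D.powersetCard 3, jChar H S ^ 2) =
      (#Dᶜ * (#Dᶜ - 1) - #Dᶜ * #D + #D * (#D - 1)) * (Fintype.card ι : ℤ) ^ 2 := by
  rw [mul_add, hH.six_mul_sum_jChar_sq, hH.six_mul_sum_jChar_sq]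
  exact sum_triple_compl_add_sum_triple (fun x y z ↦ by rw [jTriple_swap_left])
    (fun x y z ↦ by rw [jTriple_swap_right]) hH.sum_jTriple_sq D

theorem jTriple_eq_two_mul_card_sub_card (hH : IsSaturatedOA H) (a b c : κ) :
    jTriple H a b c = 2 * #{i | H i a * H i b * H i c = 1} - Fintype.card ι :=
  sum_eq_two_mul_card_sub_card fun i ↦ mul_self_eq_one_iff.1 <| by
    linear_combination H i b ^ 2 * H i c ^ 2 * hH.mul_self_eq_one i a +
      H i c ^ 2 * hH.mul_self_eq_one i b + hH.mul_self_eq_one i c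

end IsSaturatedOA

end Design

theorem sum_J3_sq_delete_three_general {ι κ : Type*} [Fintype ι] [Fintype κ] [DecidableEq κ]
    {H : ι → κ → ℤ} (hH : IsSaturatedOA H) {a b c : κ} (hab : a ≠ b) (hac : a ≠ c) (hbc : b ≠ c)
    {d : ℕ} (hd : 4 * d = #{i | H i a * H i b * H i c = 1}) :
    ∑ S ∈ ({a, b, c}ᶜ : Finset κ).powersetCard 3, jChar H S ^ 2 =
      (Fintype.card ι : ℤ) ^ 2 * (Fintype.card ι - 4) * (Fintype.card ι - 8) / 6 +
        16 * d * (Fintype.card ι - 4 * d) := by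
  have card_deleted : #{a, b, c} = 3 := card_eq_three.2 ⟨a, b, c, hab, hac, hbc, rfl⟩
  have card_kept : (#({a, b, c}ᶜ : Finset κ) : ℤ) = Fintype.card ι - 4 := by
    have := card_add_card_compl ({a, b, c} : Finset κ)
    have := hH.card_rows
    omega
  have deleted : ∑ S ∈ powersetCard 3 {a, b, c}, jChar H S ^ 2 =
      (8 * d - Fintype.card ι : ℤ) ^ 2 := by
    rw [← card_deleted, powersetCard_self, sum_singleton,
      jChar_insert_insert_singleton H hab hac hbc, hH.jTriple_eq_two_mul_card_sub_card, ← hd]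
    push_cast
    ring
  have total := hH.six_mul_sum_jChar_sq_compl_add {a, b, c}
  rw [deleted, card_kept, card_deleted] at total
  have six_mul : (Fintype.card ι : ℤ) ^ 2 * (Fintype.card ι - 4) * (Fintype.card ι - 8) =
      6 * (∑ S ∈ ({a, b, c}ᶜ : Finset κ).powersetCard 3, jChar H S ^ 2 -
        16 * d * (Fintype.card ι - 4 * d)) := by
    push_cast at total
    linear_combination -total
  rw [six_mul, Int.mul_ediv_cancel_left _ (by norm_num), sub_add_cancel]

/-- Deleting three distinct fixed columns `a, b, c` from a saturated
`OA(n, n-1, 2, 2)`, with `4d` the number of rows `i` with `aᵢ·bᵢ·cᵢ = +1`, the sum of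
`J₃(S)²` over all unordered 3-subsets of the remaining `n-4` columns equals
`n²(n-4)(n-8)/6 + 16d(n-4d)`. -/
theorem sum_J3_sq_delete_three (n : ℕ) (hn : 12 ≤ n) (h4 : 4 ∣ n)
    (H : Fin n → Fin (n - 1) → ℤ)
    (hpm : ∀ i j, H i j = 1 ∨ H i j = -1)
    (hbal : ∀ j, ∑ i : Fin n, H i j = 0)
    (horth : ∀ j k : Fin (n - 1), j ≠ k → ∑ i : Fin n, H i j * H i k = 0)
    (a b c : Fin (n - 1)) (hab : a ≠ b) (hac : a ≠ c) (hbc : b ≠ c)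
    (d : ℕ)
    (hd : 4 * d =
      ((Finset.univ : Finset (Fin n)).filter (fun i => H i a * H i b * H i c = 1)).card) :
    ∑ S ∈ ((Finset.univ : Finset (Fin (n - 1))) \ {a, b, c}).powersetCard 3,
        (∑ i : Fin n, ∏ j ∈ S, H i j) ^ 2
      = (n : ℤ) ^ 2 * ((n : ℤ) - 4) * ((n : ℤ) - 8) / 6
        + 16 * (d : ℤ) * ((n : ℤ) - 4 * (d : ℤ)) := by
  have hH : IsSaturatedOA H := ⟨by simp only [Fintype.card_fin]; omega, hpm, hbal, horth⟩
  simpa [jChar, compl_eq_univ_sdiff] using sum_J3_sq_delete_three_general hH hab hac hbc hd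
end

section
/- Let n ≥ 8 be divisible by 4, let H be a saturated orthogonal array OA(n,n−1,2,2), and let H' be the n×(n−3) design obtained from H by deleting two distinct fixed columns. Let X be the n × ((n−3)(n−2)/2) two-level design whose columns are the n−3 columns of H' together with the interaction columns of all (n−3 choose 2) unordered pairs of distinct columns of H'. Then E(s²)(X) = n²(n−5)/((n−3)(n−1)), and X is E(s²)-optimal: E(s²)(X) ≤ E(s²)(Y) for every n × ((n−3)(n−2)/2) balanced two-level design Y. -/
open Finset

/-- The `E(s²)` value of an `n × m` two-level design `X` (columns indexed by `ι`,
`m = card ι`): the average of the squared off-diagonal entries of `XᵀX`. -/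
noncomputable def Es2 {n : ℕ} {ι : Type} [Fintype ι] [DecidableEq ι]
    (X : Fin n → ι → ℚ) : ℚ :=
  (∑ i : ι, ∑ j : ι, if i ≠ j then (∑ r : Fin n, X r i * X r j) ^ 2 else 0) /
    ((Fintype.card ι : ℚ) * ((Fintype.card ι : ℚ) - 1))

/-!
Let `m` be the number of columns. Exchanging sums gives `∑ᵢⱼ ⟨colᵢ, colⱼ⟩² = ∑ᵣₛ ⟨rowᵣ, rowₛ⟩²`,
and in a balanced design the sum of all row inner products is zero. Replacing `⟨rowᵣ, rowₛ⟩` by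
`⟨rowᵣ, rowₛ⟩ + c` thus changes the right-hand side by a constant, so minimising `E(s²)` amounts
to minimising `∑ (⟨rowᵣ, rowₛ⟩ + c)²` over `r ≠ s`. If `c` is an integer with `m + c` odd, every
term is an odd square, hence at least `1`.

For `c = (n - 4)/2` the design built from `H'` makes every term equal to `1`: distinct rows of `H`
have inner product `-1`, so distinct rows of `H'` have inner product `t ∈ {-3, -1, 1}`, and the
corresponding rows of the augmented design have inner product `((t + 1)² - (n - 2))/2`.
-/

section Sums

theorem sum_sum_ite_ne {ι M : Type*} [Fintype ι] [DecidableEq ι] [AddCommGroup M]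
    (F : ι → ι → M) :
    ∑ i, ∑ j, (if i ≠ j then F i j else 0) = ∑ i, ∑ j, F i j - ∑ i, F i i := by
  simp only [← sum_sub_distrib, ite_not]
  refine sum_congr rfl fun i _ => ?_
  rw [eq_sub_iff_add_eq, ← Fintype.sum_ite_eq i (F i), ← sum_add_distrib]
  exact sum_congr rfl fun j _ => by split_ifs <;> simp

theorem sum_subtype_ne_and_ne {ι M : Type*} [Fintype ι] [DecidableEq ι] [AddCommGroup M]
    {a b : ι} (hab : a ≠ b) (F : ι → M) :
    ∑ j : {j // j ≠ a ∧ j ≠ b}, F j = ∑ j, F j - F a - F b := by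
  rw [← sum_subtype ((univ.erase a).erase b) (by simp [and_comm]) F,
    sum_erase_eq_sub (by simp [hab.symm]), sum_erase_eq_sub (mem_univ a)]

theorem card_subtype_ne_and_ne_add_two {ι : Type*} [Fintype ι] [DecidableEq ι] {a b : ι}
    (hab : a ≠ b) : Fintype.card {j // j ≠ a ∧ j ≠ b} + 2 = Fintype.card ι := by
  have h := sum_subtype_ne_and_ne hab fun _ => (1 : ℤ)
  simp only [sum_const, card_univ, nsmul_eq_mul, mul_one] at h
  omega

theorem sq_sum_eq_sum_sq_add_two_mul_sum_lt {κ R : Type*} [Fintype κ] [LinearOrder κ]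
    [CommSemiring R] (f : κ → R) :
    (∑ j, f j) ^ 2 = ∑ j, f j ^ 2 + 2 * ∑ p : {p : κ × κ // p.1 < p.2}, f p.1.1 * f p.1.2 := by
  have sum_lt : ∑ p : {p : κ × κ // p.1 < p.2}, f p.1.1 * f p.1.2
      = ∑ x, ∑ y, if x < y then f x * f y else 0 := by
    rw [← sum_subtype (univ.filter fun p : κ × κ => p.1 < p.2) (by simp)
      (fun p : κ × κ => f p.1 * f p.2), sum_filter, Fintype.sum_prod_type]
  have sum_gt : ∑ p : {p : κ × κ // p.1 < p.2}, f p.1.1 * f p.1.2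
      = ∑ x, ∑ y, if y < x then f x * f y else 0 := by
    rw [sum_lt, sum_comm]
    simp only [mul_comm]
  have sum_diag : ∑ j, f j ^ 2 = ∑ x, ∑ y, if x = y then f x * f y else 0 := by
    simp only [sum_ite_eq, mem_univ, if_true, sq]
  rw [two_mul, sum_diag]
  nth_rw 1 [sum_lt]
  rw [sum_gt, sq, sum_mul_sum]
  simp only [← sum_add_distrib]
  refine sum_congr rfl fun x _ => sum_congr rfl fun y _ => ?_
  rcases lt_trichotomy x y with h | rfl | h
  · simp [h, h.ne, h.not_gt]
  · simp
  · simp [h, h.ne', h.not_gt]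

theorem sum_sq_colGram_eq_sum_sq_rowGram {ρ ι R : Type*} [Fintype ρ] [Fintype ι]
    [CommSemiring R] (Z : ρ → ι → R) :
    ∑ i, ∑ j, (∑ r, Z r i * Z r j) ^ 2 = ∑ r, ∑ s, (Z r ⬝ᵥ Z s) ^ 2 :=
  calc ∑ i, ∑ j, (∑ r, Z r i * Z r j) ^ 2
      = ∑ p : ι × ι, ∑ q : ρ × ρ, Z q.1 p.1 * Z q.1 p.2 * (Z q.2 p.1 * Z q.2 p.2) := by
        simp only [sq, sum_mul_sum, Fintype.sum_prod_type]
    _ = ∑ q : ρ × ρ, ∑ p : ι × ι, Z q.1 p.1 * Z q.2 p.1 * (Z q.1 p.2 * Z q.2 p.2) := by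
        rw [sum_comm]
        exact sum_congr rfl fun _ _ => sum_congr rfl fun _ _ => mul_mul_mul_comm _ _ _ _
    _ = ∑ r, ∑ s, (Z r ⬝ᵥ Z s) ^ 2 := by
        simp only [dotProduct, sq, sum_mul_sum, Fintype.sum_prod_type]

end Sums

variable {ρ ι κ : Type*}

/-- A two-level design, with rows (runs) `ρ` and columns (factors) `ι`. -/
def IsTwoLevel (Z : ρ → ι → ℚ) : Prop :=
  ∀ r i, Z r i = 1 ∨ Z r i = -1

/-- A balanced design: every column sums to zero. -/
def IsBalanced [Fintype ρ] (Z : ρ → ι → ℚ) : Prop :=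
  ∀ i, ∑ r, Z r i = 0

/-- A two-level orthogonal array of strength two, with arbitrarily many columns. -/
structure IsOrthogonalArray [Fintype ρ] (H : ρ → ι → ℚ) : Prop where
  isTwoLevel : IsTwoLevel H
  isBalanced : IsBalanced H
  orthogonal : ∀ j k, j ≠ k → ∑ r, H r j * H r k = 0

/-- The columns of `D` together with the interaction columns of all unordered pairs of distinct
columns, each pair being listed in increasing order. -/
def withInteractions [LT κ] (D : ρ → κ → ℚ) : ρ → κ ⊕ {p : κ × κ // p.1 < p.2} → ℚ :=
  fun r => Sum.elim (D r) fun p => D r p.1.1 * D r p.1.2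

/-- The lower bound on `E(s²)` of a balanced two-level `n × m` design obtained by shifting the row
inner products by an integer `c` with `m + c` odd. For `m ≤ 1` the division makes it `0`. -/
def shiftBound (n m : ℕ) (c : ℚ) : ℚ :=
  (n * (n - 1) + n * (m + c) ^ 2 - n ^ 2 * (m + c ^ 2)) / (m * (m - 1))

namespace IsTwoLevel

theorem mul_self {Z : ρ → ι → ℚ} (hZ : IsTwoLevel Z) (r : ρ) (i : ι) : Z r i * Z r i = 1 :=
  mul_self_eq_one_iff.2 (hZ r i)

theorem mul_eq_one_or {Z : ρ → ι → ℚ} (hZ : IsTwoLevel Z) (r s : ρ) (i j : ι) :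
    Z r i * Z s j = 1 ∨ Z r i * Z s j = -1 := by
  rcases hZ r i with h | h <;> rcases hZ s j with h' | h' <;> simp [h, h']

theorem withInteractions [LT κ] {D : ρ → κ → ℚ} (hD : IsTwoLevel D) :
    IsTwoLevel (withInteractions D)
  | r, .inl j => hD r j
  | r, .inr p => hD.mul_eq_one_or r r p.1.1 p.1.2

variable [Fintype ι] {Z : ρ → ι → ℚ}

theorem dotProduct_self (hZ : IsTwoLevel Z) (r : ρ) : Z r ⬝ᵥ Z r = Fintype.card ι := by
  simp [dotProduct, hZ.mul_self]

theorem exists_dotProduct_eq_card_sub_two_mul (hZ : IsTwoLevel Z) (r s : ρ) :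
    ∃ k : ℤ, Z r ⬝ᵥ Z s = Fintype.card ι - 2 * k := by
  have entry (i : ι) : ∃ k : ℤ, Z r i * Z s i = 1 - 2 * k := by
    rcases hZ.mul_eq_one_or r s i i with h | h
    · exact ⟨0, by simp [h]⟩
    · exact ⟨1, by norm_num [h]⟩
  choose k hk using entry
  exact ⟨∑ i, k i, by simp [dotProduct, hk, mul_sum]⟩

theorem one_le_sq_dotProduct_add (hZ : IsTwoLevel Z) {c : ℤ} (hc : Odd (Fintype.card ι + c))
    (r s : ρ) : 1 ≤ (Z r ⬝ᵥ Z s + c) ^ 2 := by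
  obtain ⟨k, hk⟩ := hZ.exists_dotProduct_eq_card_sub_two_mul r s
  have odd_shift : Odd (Fintype.card ι + c - 2 * k) := hc.sub_even (even_two_mul k)
  have : (1 : ℤ) ≤ (Fintype.card ι + c - 2 * k) ^ 2 :=
    (one_le_sq_iff_one_le_abs _).2 (Int.one_le_abs (by rintro h; simp [h] at odd_shift))
  rw [hk, sub_add_eq_add_sub]
  exact_mod_cast this

end IsTwoLevel

namespace IsBalanced

theorem sum_sum_dotProduct [Fintype ρ] [Fintype ι] {Z : ρ → ι → ℚ} (hb : IsBalanced Z) :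
    ∑ r, ∑ s, Z r ⬝ᵥ Z s = 0 := by
  simp only [← dotProduct_sum, ← sum_dotProduct]
  simp [dotProduct, Finset.sum_apply, hb _]

variable {n : ℕ} {ι : Type} [Fintype ι] [DecidableEq ι] {Z : Fin n → ι → ℚ}

theorem sum_sq_colGram_eq (hb : IsBalanced Z) (hZ : IsTwoLevel Z) (c : ℚ) :
    ∑ i, ∑ j, (if i ≠ j then (∑ r, Z r i * Z r j) ^ 2 else 0)
      = ∑ r, ∑ s, (if r ≠ s then (Z r ⬝ᵥ Z s + c) ^ 2 else 0)
        + n * (Fintype.card ι + c) ^ 2 - n ^ 2 * (Fintype.card ι + c ^ 2) := by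
  have shift : ∑ r, ∑ s, (Z r ⬝ᵥ Z s + c) ^ 2 = ∑ r, ∑ s, (Z r ⬝ᵥ Z s) ^ 2 + n ^ 2 * c ^ 2 := by
    simp only [add_sq, sum_add_distrib, ← sum_mul, ← mul_sum, hb.sum_sum_dotProduct,
      sum_const, card_univ, Fintype.card_fin, nsmul_eq_mul]
    ring
  rw [sum_sum_ite_ne, sum_sum_ite_ne, shift, sum_sq_colGram_eq_sum_sq_rowGram]
  simp only [hZ.mul_self, hZ.dotProduct_self, sum_const, card_univ, Fintype.card_fin,
    nsmul_eq_mul, mul_one]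
  ring

theorem Es2_eq_shiftBound_add (hb : IsBalanced Z) (hZ : IsTwoLevel Z) (c : ℚ) :
    Es2 Z = shiftBound n (Fintype.card ι) c
      + (∑ r, ∑ s, if r ≠ s then (Z r ⬝ᵥ Z s + c) ^ 2 - 1 else 0)
        / (Fintype.card ι * (Fintype.card ι - 1)) := by
  rw [Es2, shiftBound, hb.sum_sq_colGram_eq hZ c, ← add_div, sum_sum_ite_ne, sum_sum_ite_ne]
  simp only [sum_sub_distrib, sum_const, card_univ, Fintype.card_fin, nsmul_eq_mul, mul_one]
  ring

theorem shiftBound_le_Es2 (hb : IsBalanced Z) (hZ : IsTwoLevel Z) {c : ℤ}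
    (hc : Odd (Fintype.card ι + c)) : shiftBound n (Fintype.card ι) c ≤ Es2 Z := by
  rw [hb.Es2_eq_shiftBound_add hZ c]
  have card_mul_nonneg : (0 : ℚ) ≤ Fintype.card ι * (Fintype.card ι - 1) := by
    rcases Nat.eq_zero_or_pos (Fintype.card ι) with h | h
    · simp [h]
    · exact mul_nonneg (Nat.cast_nonneg _) (sub_nonneg.2 (Nat.one_le_cast.2 h))
  refine le_add_of_nonneg_right (div_nonneg (sum_nonneg fun r _ => sum_nonneg fun s _ => ?_)
    card_mul_nonneg)
  split_ifs
  · exact sub_nonneg.2 (hZ.one_le_sq_dotProduct_add hc r s)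
  · exact le_rfl

theorem Es2_eq_shiftBound (hb : IsBalanced Z) (hZ : IsTwoLevel Z) {c : ℚ}
    (hc : ∀ r s, r ≠ s → (Z r ⬝ᵥ Z s + c) ^ 2 = 1) : Es2 Z = shiftBound n (Fintype.card ι) c := by
  rw [hb.Es2_eq_shiftBound_add hZ c]
  have excess (r s : Fin n) : (if r ≠ s then (Z r ⬝ᵥ Z s + c) ^ 2 - 1 else 0) = 0 := by
    split_ifs with h
    · rw [hc r s h, sub_self]
    · rfl
  simp only [excess, sum_const_zero, zero_div, add_zero]

end IsBalanced

namespace IsOrthogonalArray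

variable [Fintype ρ] {H : ρ → ι → ℚ}

theorem comp_injective (hH : IsOrthogonalArray H) {f : κ → ι} (hf : f.Injective) :
    IsOrthogonalArray fun r j => H r (f j) where
  isTwoLevel r j := hH.isTwoLevel r (f j)
  isBalanced j := hH.isBalanced (f j)
  orthogonal _ _ hjk := hH.orthogonal _ _ (hf.ne hjk)

theorem isBalanced_withInteractions [Preorder κ] {D : ρ → κ → ℚ} (hD : IsOrthogonalArray D) :
    IsBalanced (withInteractions D)
  | .inl j => hD.isBalanced j
  | .inr p => hD.orthogonal _ _ p.2.ne

/- Adjoining a column of ones to a saturated array gives a square matrix with orthogonal columns of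
equal norm, hence with orthogonal rows. -/
theorem dotProduct_eq_neg_one [Fintype ι] (hH : IsOrthogonalArray H)
    (hcard : Fintype.card ρ = Fintype.card ι + 1) {r s : ρ} (hrs : r ≠ s) :
    H r ⬝ᵥ H s = -1 := by
  classical
  let A : Matrix ρ (Option ι) ℚ := fun r o => o.elim 1 (H r)
  have card_ne_zero : (Fintype.card ρ : ℚ) ≠ 0 := by rw [hcard]; positivity
  have columns_orthonormal : ((Fintype.card ρ : ℚ)⁻¹ • A.transpose) * A = 1 := by
    ext i j
    rw [Matrix.smul_mul, Matrix.smul_apply, Matrix.mul_apply]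
    simp only [Matrix.transpose_apply]
    rcases i with _ | i <;> rcases j with _ | j
    · simp [A, card_ne_zero]
    · simp [A, hH.isBalanced j]
    · simp [A, hH.isBalanced i]
    · rcases eq_or_ne i j with rfl | hij
      · simp [A, hH.isTwoLevel.mul_self, card_ne_zero]
      · simp [A, hH.orthogonal i j hij, hij]
  have rows_orthonormal : A * ((Fintype.card ρ : ℚ)⁻¹ • A.transpose) = 1 :=
    (Matrix.mul_eq_one_comm_of_card_eq _ _ _ (by simp [hcard])).1 columns_orthonormal
  have rows_orthogonal : 1 + H r ⬝ᵥ H s = 0 := by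
    have entry := congrFun₂ rows_orthonormal r s
    rw [Matrix.mul_smul, Matrix.smul_apply, Matrix.mul_apply, Matrix.one_apply_ne hrs] at entry
    simp only [Matrix.transpose_apply] at entry
    simpa [A, Fintype.sum_option, card_ne_zero, dotProduct] using entry
  linarith

end IsOrthogonalArray

section Interactions

variable [Fintype κ] [LinearOrder κ]

theorem two_mul_dotProduct_withInteractions {D : ρ → κ → ℚ} (hD : IsTwoLevel D) (r s : ρ) :
    2 * (withInteractions D r ⬝ᵥ withInteractions D s)
      = (D r ⬝ᵥ D s + 1) ^ 2 - (Fintype.card κ + 1) := by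
  have sq_one (j : κ) : (D r j * D s j) ^ 2 = 1 := by
    rw [mul_pow, sq, sq, hD.mul_self, hD.mul_self, one_mul]
  have sq_dotProduct : (D r ⬝ᵥ D s) ^ 2 = Fintype.card κ
      + 2 * ∑ p : {p : κ × κ // p.1 < p.2}, D r p.1.1 * D r p.1.2 * (D s p.1.1 * D s p.1.2) := by
    simp [dotProduct, sq_sum_eq_sum_sq_add_two_mul_sum_lt, sq_one, mul_mul_mul_comm]
  rw [withInteractions, withInteractions, sumElim_dotProduct_sumElim, add_sq, sq_dotProduct]
  simp only [dotProduct]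
  ring

theorem two_mul_card_sum_lt :
    2 * Fintype.card (κ ⊕ {p : κ × κ // p.1 < p.2})
      = Fintype.card κ * (Fintype.card κ + 1) := by
  -- The squared norm of a row counts the columns; take the all-ones design.
  have h := two_mul_dotProduct_withInteractions (D := fun (_ : Unit) (_ : κ) => (1 : ℚ))
    (fun _ _ => Or.inl rfl) () ()
  rw [(IsTwoLevel.withInteractions fun _ _ => Or.inl rfl).dotProduct_self] at h
  simp only [dotProduct, mul_one, sum_const, card_univ, nsmul_eq_mul] at h
  have : (2 * Fintype.card (κ ⊕ {p : κ × κ // p.1 < p.2}) : ℚ)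
      = Fintype.card κ * (Fintype.card κ + 1) := by rw [h]; ring
  exact_mod_cast this

end Interactions

/-- The design obtained from `H` by deleting the columns `a` and `b`. -/
def deleteTwo (H : ρ → ι → ℚ) (a b : ι) : ρ → {j : ι // j ≠ a ∧ j ≠ b} → ℚ :=
  fun r j => H r j

theorem IsOrthogonalArray.deleteTwo [Fintype ρ] {H : ρ → ι → ℚ} (hH : IsOrthogonalArray H)
    (a b : ι) : IsOrthogonalArray (deleteTwo H a b) :=
  hH.comp_injective Subtype.val_injective

theorem dotProduct_deleteTwo [Fintype ι] [DecidableEq ι] (H : ρ → ι → ℚ) {a b : ι} (hab : a ≠ b)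
    (r s : ρ) :
    deleteTwo H a b r ⬝ᵥ deleteTwo H a b s = H r ⬝ᵥ H s - H r a * H s a - H r b * H s b :=
  sum_subtype_ne_and_ne hab fun j => H r j * H s j

section DeleteTwoWithInteractions

variable [Fintype ι] [LinearOrder ι] {a b : ι}

theorem sq_dotProduct_withInteractions_deleteTwo_add [Fintype ρ] {H : ρ → ι → ℚ}
    (hH : IsOrthogonalArray H) (hcard : Fintype.card ρ = Fintype.card ι + 1) (hab : a ≠ b)
    {r s : ρ} (hrs : r ≠ s) :
    (withInteractions (deleteTwo H a b) r ⬝ᵥ withInteractions (deleteTwo H a b) s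
      + ((Fintype.card ρ : ℚ) - 4) / 2) ^ 2 = 1 := by
  have card_deleted : (Fintype.card ρ : ℚ) = Fintype.card {j : ι // j ≠ a ∧ j ≠ b} + 3 := by
    rw [hcard, ← card_subtype_ne_and_ne_add_two hab]
    push_cast
    ring
  have row_product := two_mul_dotProduct_withInteractions (hH.deleteTwo a b).isTwoLevel r s
  rw [dotProduct_deleteTwo H hab, hH.dotProduct_eq_neg_one hcard hrs] at row_product
  rw [eq_div_of_mul_eq two_ne_zero ((mul_comm _ _).trans row_product), card_deleted]
  rcases hH.isTwoLevel.mul_eq_one_or r s a a with ha | ha <;>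
    rcases hH.isTwoLevel.mul_eq_one_or r s b b with hb | hb <;>
    rw [ha, hb] <;> ring

theorem card_withInteractions_deleteTwo (hab : a ≠ b) :
    Fintype.card ({j : ι // j ≠ a ∧ j ≠ b} ⊕
      {p : {j : ι // j ≠ a ∧ j ≠ b} × {j : ι // j ≠ a ∧ j ≠ b} // p.1 < p.2})
      = (Fintype.card ι - 2) * (Fintype.card ι - 1) / 2 := by
  rw [← card_subtype_ne_and_ne_add_two hab]
  exact Nat.eq_div_of_mul_eq_right two_ne_zero two_mul_card_sum_lt

end DeleteTwoWithInteractions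

theorem Es2_withInteractions_deleteTwo {n : ℕ} {ι : Type} [Fintype ι] [LinearOrder ι]
    {H : Fin n → ι → ℚ} (hH : IsOrthogonalArray H) (hcard : n = Fintype.card ι + 1) {a b : ι}
    (hab : a ≠ b) :
    Es2 (withInteractions (deleteTwo H a b))
      = shiftBound n ((n - 3) * (n - 2) / 2) (((n : ℚ) - 4) / 2) := by
  have hD := hH.deleteTwo a b
  have shifted_sq (r s : Fin n) (hrs : r ≠ s) :
      (withInteractions (deleteTwo H a b) r ⬝ᵥ withInteractions (deleteTwo H a b) s
        + ((n : ℚ) - 4) / 2) ^ 2 = 1 := by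
    simpa using sq_dotProduct_withInteractions_deleteTwo_add hH (by simpa using hcard) hab hrs
  rw [hD.isBalanced_withInteractions.Es2_eq_shiftBound hD.isTwoLevel.withInteractions shifted_sq,
    card_withInteractions_deleteTwo hab, hcard]
  rfl

theorem shiftBound_interactions {n : ℕ} (hn : 4 < n) :
    shiftBound n ((n - 3) * (n - 2) / 2) (((n : ℚ) - 4) / 2)
      = (n : ℚ) ^ 2 * ((n : ℚ) - 5) / (((n : ℚ) - 3) * ((n : ℚ) - 1)) := by
  obtain ⟨k, rfl⟩ : ∃ k, n = k + 5 := ⟨n - 5, by omega⟩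
  have cast_columns : (((k + 5 - 3) * (k + 5 - 2) / 2 : ℕ) : ℚ) = (k + 2) * (k + 3) / 2 := by
    rw [show k + 5 - 3 = k + 2 by omega, show k + 5 - 2 = k + 3 by omega,
      Nat.cast_div (Nat.even_mul_succ_self (k + 2)).two_dvd two_ne_zero]
    push_cast
    ring
  have columns_sub_one : ((k : ℚ) + 2) * (k + 3) / 2 - 1 = (k + 1) * (k + 4) / 2 := by ring
  have n_sub_three : ((k + 5 : ℕ) : ℚ) - 3 = k + 2 := by push_cast; ring
  have n_sub_one : ((k + 5 : ℕ) : ℚ) - 1 = k + 4 := by push_cast; ring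
  rw [shiftBound, cast_columns, columns_sub_one, n_sub_three, n_sub_one]
  push_cast
  field_simp
  ring

theorem exists_int_shift_odd {n : ℕ} (hn : 0 < n) (h4 : 4 ∣ n) :
    ∃ c : ℤ, (c : ℚ) = ((n : ℚ) - 4) / 2 ∧ Odd ((((n - 3) * (n - 2) / 2 : ℕ) : ℤ) + c) := by
  obtain ⟨k, rfl⟩ : ∃ k, n = 4 * k + 4 := ⟨n / 4 - 1, by omega⟩
  have columns : (4 * k + 4 - 3) * (4 * k + 4 - 2) / 2 = (4 * k + 1) * (2 * k + 1) := by
    rw [show 4 * k + 4 - 3 = 4 * k + 1 by omega, show 4 * k + 4 - 2 = (2 * k + 1) * 2 by omega,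
      ← mul_assoc, Nat.mul_div_cancel _ two_pos]
  refine ⟨2 * k, by push_cast; ring, 4 * k ^ 2 + 4 * k, ?_⟩
  rw [columns]
  push_cast
  ring

/-- Deleting two distinct fixed columns from a saturated `OA(n, n-1, 2, 2)`
gives `H'` with `n-3` columns; augmenting `H'` with all its two-column interactions
yields an `n × ((n-3)(n-2)/2)` design `X` with `E(s²)(X) = n²(n-5)/((n-3)(n-1))`, which
is `E(s²)`-optimal among all balanced `n × ((n-3)(n-2)/2)` two-level designs. -/
theorem Es2_optimal_full_delete_two (n : ℕ) (hn : 8 ≤ n) (h4 : 4 ∣ n)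
    (H : Fin n → Fin (n - 1) → ℚ)
    (hpm : ∀ i j, H i j = 1 ∨ H i j = -1)
    (hbal : ∀ j, ∑ i : Fin n, H i j = 0)
    (horth : ∀ j k : Fin (n - 1), j ≠ k → ∑ i : Fin n, H i j * H i k = 0)
    (a b : Fin (n - 1)) (hab : a ≠ b)
    (X : Fin n → ({j : Fin (n - 1) // j ≠ a ∧ j ≠ b} ⊕
      {p : {j : Fin (n - 1) // j ≠ a ∧ j ≠ b} × {j : Fin (n - 1) // j ≠ a ∧ j ≠ b} //
        p.1.1 < p.2.1}) → ℚ)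
    (hX : ∀ r, X r = Sum.elim (fun j => H r j.1) (fun p => H r p.1.1.1 * H r p.1.2.1)) :
    Es2 X = (n : ℚ) ^ 2 * ((n : ℚ) - 5) / (((n : ℚ) - 3) * ((n : ℚ) - 1)) ∧
      ∀ Y : Fin n → Fin ((n - 3) * (n - 2) / 2) → ℚ,
        (∀ i j, Y i j = 1 ∨ Y i j = -1) → (∀ j, ∑ i : Fin n, Y i j = 0) →
          Es2 X ≤ Es2 Y := by
  obtain rfl : X = withInteractions (deleteTwo H a b) := funext hX
  have hEs2 := Es2_withInteractions_deleteTwo ⟨hpm, hbal, horth⟩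
    (by rw [Fintype.card_fin]; omega) hab
  obtain ⟨c, hc, odd_shift⟩ := exists_int_shift_odd (by omega) h4
  refine ⟨hEs2.trans (shiftBound_interactions (by omega)), fun Y hY hYb => hEs2.trans_le ?_⟩
  have bound := IsBalanced.shiftBound_le_Es2 hYb hY (c := c) (by rwa [Fintype.card_fin])
  rwa [Fintype.card_fin, hc] at bound
end
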